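/- arXiv:1607.07211 — 6 statements merged into one kernel-verified Lean document; each statement's English description precedes it below -/
import Mathlib

section
/- The permutation-invariant Kronecker delta is idempotent under contraction: for ι a finite type with decidable equality and all tuples i, j : Fin N → ι, one has Σ_{α : Fin N → ι} δ_{i;α} · δ_{α;j} = δ_{i;j}, where the sum runs over all tuples α. -/
/-- The permutation-invariant Kronecker delta
`δ_{u;v} = (1/S!) · Σ_{σ ∈ S_S} ∏_{k} [u_k = v_{σ(k)}]`. -/
noncomputable def permDelta {ι : Type*} [DecidableEq ι] {S : ℕ} (u v : Fin S → ι) : ℂ :=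
  (S.factorial : ℂ)⁻¹ *
    ∑ σ : Equiv.Perm (Fin S), ∏ k : Fin S, if u k = v (σ k) then 1 else 0

theorem permDelta_eq_aux {ι : Type*} [DecidableEq ι] {S : ℕ} (u v : Fin S → ι) :
    permDelta u v = (S.factorial : ℂ)⁻¹ *
      ∑ σ : Equiv.Perm (Fin S), if u = v ∘ σ then 1 else 0 := by
  unfold permDelta
  congr 1
  refine Finset.sum_congr rfl fun σ _ => ?_
  rw [Finset.prod_ite_zero]
  simp [funext_iff]

/-- The permutation-invariant Kronecker delta is idempotent under contraction:
`Σ_α δ_{i;α} · δ_{α;j} = δ_{i;j}`. -/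
theorem permDelta_contraction {ι : Type*} [Fintype ι] [DecidableEq ι] {N : ℕ}
    (i j : Fin N → ι) :
    ∑ α : Fin N → ι, permDelta i α * permDelta α j = permDelta i j := by
  have hN : (N.factorial : ℂ) ≠ 0 := by exact_mod_cast N.factorial_ne_zero
  have key : ∑ α : Fin N → ι,
      (∑ σ : Equiv.Perm (Fin N), if i = α ∘ σ then (1 : ℂ) else 0) *
        (∑ τ : Equiv.Perm (Fin N), if α = j ∘ τ then (1 : ℂ) else 0) =
      (N.factorial : ℂ) * ∑ σ : Equiv.Perm (Fin N), if i = j ∘ σ then (1 : ℂ) else 0 := by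
    simp_rw [Finset.sum_mul_sum]
    rw [Finset.sum_comm]
    have h : ∀ σ : Equiv.Perm (Fin N),
        ∑ α : Fin N → ι, ∑ τ : Equiv.Perm (Fin N),
          (if i = α ∘ σ then (1 : ℂ) else 0) * (if α = j ∘ τ then (1 : ℂ) else 0) =
        ∑ τ : Equiv.Perm (Fin N), if i = j ∘ τ then (1 : ℂ) else 0 := by
      intro σ
      rw [Finset.sum_comm]
      rw [← Equiv.sum_comp (Equiv.mulRight σ)
        (fun τ : Equiv.Perm (Fin N) => if i = j ∘ τ then (1 : ℂ) else 0)]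
      refine Finset.sum_congr rfl fun τ _ => ?_
      simp only [mul_ite, mul_one, mul_zero, Finset.sum_ite_eq', Finset.mem_univ, if_true]
      rfl
    rw [Finset.sum_congr rfl fun σ _ => h σ]
    simp [Fintype.card_perm]
  simp_rw [permDelta_eq_aux, mul_mul_mul_comm]
  rw [← Finset.mul_sum, key]
  field_simp
end

section
/- (Lemma 1, Bargmann realization.) Let ι be a type with decidable equality, M ≤ N natural numbers, i : Fin M → ι and j : Fin N → ι. In MvPolynomial ι ℂ, the iterated partial derivative of the monomial X_{j_1}⋯X_{j_N} satisfies (∂_{i_1}∘⋯∘∂_{i_M})(X_{j_1}⋯X_{j_N}) = M! · Σ_{α} δ_{i; j∘α} · ∏_{l ∉ range α} X_{j_l}, where the sum runs over all strictly monotone maps α : Fin M → Fin N (i.e. over all choices 1 ≤ α_1 < ⋯ < α_M ≤ N), δ_{i; j∘α} is the permutation-invariant Kronecker delta of the M-tuples i and (j(α_1),…,j(α_M)), and the product of variables runs over those positions l of j not in the range of α. -/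
/-- The iterated formal partial derivative `∂_{i_1} ∘ ⋯ ∘ ∂_{i_M}` in the Bargmann
realization of bosonic Fock space (annihilation operators). -/
noncomputable def pderivs {ι : Type*} [DecidableEq ι] {M : ℕ} (i : Fin M → ι)
    (p : MvPolynomial ι ℂ) : MvPolynomial ι ℂ :=
  (List.ofFn i).foldr (fun a q => MvPolynomial.pderiv a q) p

open MvPolynomial in
theorem pderiv_prod_aux {ι κ : Type*} [DecidableEq ι] [DecidableEq κ] (a : ι) (j : κ → ι)
    (s : Finset κ) :
    pderiv a (∏ l ∈ s, (X (j l) : MvPolynomial ι ℂ)) =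
      ∑ l ∈ s, (if a = j l then 1 else 0) * ∏ m ∈ s.erase l, X (j m) := by
  induction s using Finset.induction_on with
  | empty => simp
  | insert b s hb ih =>
    rw [Finset.prod_insert hb, Derivation.leibniz, ih, Finset.sum_insert hb,
      Finset.erase_insert hb, pderiv_X, Pi.single_apply, smul_eq_mul, smul_eq_mul, add_comm,
      Finset.mul_sum]
    congr 1
    · rw [mul_comm]
      simp only [eq_comm]
    · refine Finset.sum_congr rfl fun l hl => ?_
      have hbl : b ≠ l := fun h => hb (h ▸ hl)
      rw [Finset.erase_insert_of_ne hbl, Finset.prod_insert (by simp [hb])]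
      ring

open MvPolynomial in
theorem pderivs_emb_aux {ι : Type*} [DecidableEq ι] {N : ℕ} (j : Fin N → ι) :
    ∀ (M : ℕ) (i : Fin M → ι), pderivs i (∏ x : Fin N, X (j x)) =
      ∑ e : Fin M ↪ Fin N, (∏ k, if i k = j (e k) then (1 : MvPolynomial ι ℂ) else 0) *
        ∏ l ∈ (Finset.univ.map e)ᶜ, X (j l) := by
  intro M
  induction M with
  | zero =>
    intro i
    simp [pderivs]
  | succ M ih =>
    intro i
    have h : pderivs i (∏ x : Fin N, X (j x)) =
        pderiv (i 0) (pderivs (fun k : Fin M => i k.succ) (∏ x : Fin N, X (j x))) := by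
      simp [pderivs, List.ofFn_succ]
    rw [h, ih, map_sum, ← (Equiv.embeddingFinSucc M (Fin N)).symm.sum_comp, Fintype.sum_sigma]
    refine Finset.sum_congr rfl fun e _ => ?_
    have hC : (∏ k : Fin M, if i k.succ = j (e k) then (1 : MvPolynomial ι ℂ) else 0) =
        C (∏ k : Fin M, if i k.succ = j (e k) then (1 : ℂ) else 0) := by
      rw [map_prod]
      exact Finset.prod_congr rfl fun k _ => by split_ifs <;> simp
    rw [hC, pderiv_C_mul, ← hC, pderiv_prod_aux, Finset.mul_sum]
    rw [Finset.sum_subtype (p := fun l => l ∉ Set.range e) _ (by simp)]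
    refine Finset.sum_congr rfl fun l _ => ?_
    rw [Fin.prod_univ_succ, ← mul_assoc]
    congr 1
    · simp [mul_comm]
    · refine Finset.prod_congr ?_ fun _ _ => rfl
      ext m
      simp [Fin.exists_fin_succ, eq_comm]

open MvPolynomial in
theorem pderivs_monomial {ι : Type*} [DecidableEq ι] {M N : ℕ} (hMN : M ≤ N)
    (i : Fin M → ι) (j : Fin N → ι) :
    pderivs i (∏ x : Fin N, MvPolynomial.X (j x)) =
      (M.factorial : MvPolynomial ι ℂ) *
        ∑ s : {s : Finset (Fin N) // s.card = M},
          MvPolynomial.C (permDelta i (fun x => j (s.1.orderEmbOfFin s.2 x))) *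
            ∏ l ∈ s.1ᶜ, MvPolynomial.X (j l) := by
  rw [pderivs_emb_aux, Finset.mul_sum]
  let F : (Σ _ : {s : Finset (Fin N) // s.card = M}, Equiv.Perm (Fin M)) → (Fin M ↪ Fin N) :=
    fun p => p.2.toEmbedding.trans (p.1.1.orderEmbOfFin p.1.2).toEmbedding
  have hF : ∀ p k, F p k = p.1.1.orderEmbOfFin p.1.2 (p.2 k) := fun _ _ => rfl
  have hr : ∀ p, Finset.univ.map (F p) = p.1.1 := by
    intro p
    apply Finset.eq_of_subset_of_card_le
    · intro x hx
      obtain ⟨k, -, rfl⟩ := Finset.mem_map.1 hx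
      rw [hF]
      exact Finset.orderEmbOfFin_mem _ _ _
    · simp [p.1.2]
  have hb : Function.Bijective F := by
    constructor
    · rintro ⟨s, σ⟩ ⟨t, τ⟩ h
      have hst : s = t := Subtype.ext (by rw [← hr ⟨s, σ⟩, h, hr])
      subst hst
      have : σ = τ := by
        ext1 k
        have := DFunLike.congr_fun h k
        rw [hF, hF] at this
        exact (s.1.orderEmbOfFin s.2).injective this
      rw [this]
    · intro e
      have hc : (Finset.univ.map e).card = M := by simp
      have hx : ∀ k, ∃ x, (Finset.univ.map e).orderEmbOfFin hc x = e k := by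
        intro k
        have : e k ∈ Set.range ((Finset.univ.map e).orderEmbOfFin hc) := by
          rw [Finset.range_orderEmbOfFin]; simp
        exact this
      choose f hf using hx
      have hinj : Function.Injective f := by
        intro a b hab
        apply e.injective
        rw [← hf, ← hf, hab]
      refine ⟨⟨⟨_, hc⟩, Equiv.ofBijective f (Finite.injective_iff_bijective.1 hinj)⟩, ?_⟩
      ext1 k
      rw [hF]
      exact hf k
  rw [← hb.sum_comp, Fintype.sum_sigma]
  refine Finset.sum_congr rfl fun s _ => ?_
  simp only [hr]
  rw [← Finset.sum_mul, ← mul_assoc]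
  congr 1
  have hM : (M.factorial : ℂ) ≠ 0 := by exact_mod_cast M.factorial_ne_zero
  rw [permDelta, ← map_natCast (C : ℂ →+* MvPolynomial ι ℂ), ← map_mul,
    mul_inv_cancel_left₀ hM, map_sum]
  refine Finset.sum_congr rfl fun σ _ => ?_
  rw [map_prod]
  refine Finset.prod_congr rfl fun k _ => ?_
  rw [hF]
  split_ifs <;> simp
end

section
/- (Orthonormality of symmetrized states, Bargmann realization.) Let ι be a type with decidable equality and i, j : Fin N → ι. In MvPolynomial ι ℂ, the full iterated partial derivative of a degree-N monomial is the constant (∂_{i_1}∘⋯∘∂_{i_N})(X_{j_1}⋯X_{j_N}) = N! · δ_{i;j}, where δ_{i;j} is the permutation-invariant Kronecker delta. -/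
theorem aux_leib {ι α : Type*} [DecidableEq α] (a : ι) (s : Finset α)
    (f : α → MvPolynomial ι ℂ) :
    MvPolynomial.pderiv a (∏ x ∈ s, f x) =
      ∑ x ∈ s, MvPolynomial.pderiv a (f x) * ∏ y ∈ s.erase x, f y := by
  induction s using Finset.induction_on with
  | empty => simp
  | insert b s hb ih =>
    rw [Finset.prod_insert hb, Finset.sum_insert hb, MvPolynomial.pderiv_mul, ih,
      Finset.erase_insert hb, Finset.mul_sum]
    congr 1
    refine Finset.sum_congr rfl fun x hx => ?_
    have hne : b ≠ x := fun h => hb (h ▸ hx)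
    rw [Finset.erase_insert_of_ne hne, Finset.prod_insert (fun h => hb (Finset.mem_of_mem_erase h))]
    ring

theorem aux_erase {M : Type*} [CommMonoid M] {n : ℕ} (p : Fin (n + 1)) (f : Fin (n + 1) → M) :
    ∏ y ∈ Finset.univ.erase p, f y = ∏ m : Fin n, f (Equiv.swap 0 p m.succ) := by
  have h1 : ∏ y ∈ Finset.univ.erase p, f y = ∏ y, Function.update f p 1 y := by
    rw [← Finset.mul_prod_erase Finset.univ _ (Finset.mem_univ p), Function.update_self, one_mul]
    refine Finset.prod_congr rfl fun x hx => ?_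
    rw [Function.update_of_ne (Finset.ne_of_mem_erase hx)]
  rw [h1, ← Equiv.prod_comp (Equiv.swap 0 p), Fin.prod_univ_succ]
  simp only [Equiv.swap_apply_left, Function.update_self, one_mul]
  refine Finset.prod_congr rfl fun x _ => ?_
  rw [Function.update_of_ne]
  intro h
  have h2 : Equiv.swap 0 p x.succ = Equiv.swap 0 p 0 := by rw [h, Equiv.swap_apply_left]
  exact Fin.succ_ne_zero x ((Equiv.swap 0 p).injective h2)

theorem aux_comm {ι : Type*} [DecidableEq ι] (a b : ι) (p : MvPolynomial ι ℂ) :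
    MvPolynomial.pderiv a (MvPolynomial.pderiv b p) =
      MvPolynomial.pderiv b (MvPolynomial.pderiv a p) := by
  have h : ⁅(MvPolynomial.pderiv a : Derivation ℂ (MvPolynomial ι ℂ) (MvPolynomial ι ℂ)),
      (MvPolynomial.pderiv b : Derivation ℂ (MvPolynomial ι ℂ) (MvPolynomial ι ℂ))⁆ = 0 := by
    apply MvPolynomial.derivation_ext
    intro x
    rw [Derivation.commutator_apply, MvPolynomial.pderiv_X, MvPolynomial.pderiv_X]
    simp only [Pi.single_apply]
    split_ifs <;> simp
  have h2 := congrArg (fun D => D p) h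
  simp only [Derivation.commutator_apply, Derivation.zero_apply] at h2
  exact sub_eq_zero.mp h2

theorem aux_foldr {ι : Type*} [DecidableEq ι] (a : ι) (l : List ι) (p : MvPolynomial ι ℂ) :
    MvPolynomial.pderiv a (l.foldr (fun a q => MvPolynomial.pderiv a q) p) =
      l.foldr (fun a q => MvPolynomial.pderiv a q) (MvPolynomial.pderiv a p) := by
  induction l with
  | nil => rfl
  | cons b l ih => simp only [List.foldr_cons]; rw [aux_comm, ih]

theorem aux_lin {ι α : Type*} [DecidableEq ι] (l : List ι) (s : Finset α) (c : α → ℂ)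
    (f : α → MvPolynomial ι ℂ) :
    l.foldr (fun a q => MvPolynomial.pderiv a q) (∑ x ∈ s, MvPolynomial.C (c x) * f x) =
      ∑ x ∈ s, MvPolynomial.C (c x) * l.foldr (fun a q => MvPolynomial.pderiv a q) (f x) := by
  induction l with
  | nil => rfl
  | cons b l ih => simp only [List.foldr_cons]; rw [ih]; simp [MvPolynomial.pderiv_C_mul]

theorem aux_main {ι : Type*} [DecidableEq ι] {N : ℕ} (i j : Fin N → ι) :
    pderivs i (∏ x : Fin N, MvPolynomial.X (j x)) =
      MvPolynomial.C (∑ σ : Equiv.Perm (Fin N), ∏ k : Fin N, if i k = j (σ k) then 1 else 0) := by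
  induction N with
  | zero => simp [pderivs]
  | succ n ih =>
    have hd : MvPolynomial.pderiv (i 0) (∏ x : Fin (n + 1), MvPolynomial.X (j x)) =
        ∑ p : Fin (n + 1), MvPolynomial.C (if i 0 = j p then (1 : ℂ) else 0) *
          ∏ m : Fin n, MvPolynomial.X (j (Equiv.swap 0 p m.succ)) := by
      rw [aux_leib]
      refine Finset.sum_congr rfl fun p _ => ?_
      rw [aux_erase, MvPolynomial.pderiv_X, Pi.single_apply]
      congr 1
      by_cases h : i 0 = j p
      · simp [h]
      · simp [h, Ne.symm h]
    unfold pderivs at ih ⊢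
    rw [List.ofFn_succ, List.foldr_cons, aux_foldr, hd, aux_lin,
      ← Equiv.sum_comp Equiv.Perm.decomposeFin.symm, Fintype.sum_prod_type, map_sum]
    refine Finset.sum_congr rfl fun p _ => ?_
    rw [ih (fun m => i m.succ) (fun m => j (Equiv.swap 0 p m.succ)), ← map_mul, Finset.mul_sum]
    congr 1
    refine Finset.sum_congr rfl fun e _ => ?_
    rw [Fin.prod_univ_succ]
    simp only [Equiv.Perm.decomposeFin_symm_apply_zero, Equiv.Perm.decomposeFin_symm_apply_succ]

/-- Orthonormality of symmetrized states (Bargmann realization):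
`(∂_{i_1}∘⋯∘∂_{i_N})(X_{j_1}⋯X_{j_N}) = N! · δ_{i;j}` as a constant polynomial. -/
theorem pderivs_monomial_full {ι : Type*} [DecidableEq ι] {N : ℕ} (i j : Fin N → ι) :
    pderivs i (∏ x : Fin N, MvPolynomial.X (j x)) =
      MvPolynomial.C ((N.factorial : ℂ) * permDelta i j) := by
  rw [aux_main, permDelta, mul_inv_cancel_left₀]
  exact_mod_cast Nat.factorial_ne_zero N
end

section
/- (Generalized number-operator identity, Bargmann realization.) Let ι be a finite type with decidable equality, M ≤ N natural numbers, and j : Fin N → ι. In MvPolynomial ι ℂ, Σ_{i : Fin M → ι} X_{i_1}⋯X_{i_M} · (∂_{i_1}∘⋯∘∂_{i_M})(X_{j_1}⋯X_{j_N}) = (N!/(N−M)!) · X_{j_1}⋯X_{j_N}, where the sum runs over all M-tuples i of elements of ι. In particular, for M = 1 this is Euler's identity for the degree-N monomial, i.e. the number operator acting with eigenvalue N. -/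
theorem pderivs_cons {ι : Type*} [DecidableEq ι] {M : ℕ} (a : ι) (i : Fin M → ι)
    (p : MvPolynomial ι ℂ) :
    pderivs (Fin.cons a i : Fin (M + 1) → ι) p = MvPolynomial.pderiv a (pderivs i p) := by
  simp [pderivs, List.ofFn_succ]

theorem pderivs_homog {ι : Type*} [DecidableEq ι] {N : ℕ} (p : MvPolynomial ι ℂ)
    (hp : p.IsHomogeneous N) (M : ℕ) (i : Fin M → ι) :
    (pderivs i p).IsHomogeneous (N - M) := by
  induction M with
  | zero => simpa [pderivs] using hp
  | succ M ih =>
    rw [← Fin.cons_self_tail i, pderivs_cons]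
    exact (ih (Fin.tail i)).pderiv

theorem number_aux {ι : Type*} [Fintype ι] [DecidableEq ι] {N : ℕ} (p : MvPolynomial ι ℂ)
    (hp : p.IsHomogeneous N) (M : ℕ) :
    ∑ i : Fin M → ι, (∏ x : Fin M, MvPolynomial.X (i x)) * pderivs i p =
      (N.descFactorial M) • p := by
  induction M with
  | zero => simp [pderivs]
  | succ M ih =>
    rw [← (Fin.consEquiv (fun _ : Fin (M + 1) => ι)).sum_comp, Fintype.sum_prod_type_right,
      Nat.descFactorial_succ, mul_smul, ← ih, Finset.smul_sum]
    refine Finset.sum_congr rfl fun i _ => ?_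
    have h := (pderivs_homog p hp M i).sum_X_mul_pderiv
    rw [← mul_smul_comm, ← h, Finset.mul_sum]
    refine Finset.sum_congr rfl fun a _ => ?_
    change (∏ x, MvPolynomial.X ((Fin.cons a i : Fin (M + 1) → ι) x)) *
      pderivs (Fin.cons a i : Fin (M + 1) → ι) p = _
    rw [pderivs_cons, Fin.prod_univ_succ]
    simp only [Fin.cons_zero, Fin.cons_succ]
    ring

/-- Generalized number-operator identity (Bargmann realization): for `M ≤ N`,
`Σ_{i : Fin M → ι} X_{i_1}⋯X_{i_M} · (∂_{i_1}∘⋯∘∂_{i_M})(X_{j_1}⋯X_{j_N})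
  = (N!/(N−M)!) · X_{j_1}⋯X_{j_N}`. -/
theorem creation_annihilation_number_identity {ι : Type*} [Fintype ι] [DecidableEq ι]
    {M N : ℕ} (hMN : M ≤ N) (j : Fin N → ι) :
    ∑ i : Fin M → ι,
        (∏ x : Fin M, MvPolynomial.X (i x)) * pderivs i (∏ x : Fin N, MvPolynomial.X (j x)) =
      MvPolynomial.C ((N.factorial : ℂ) / ((N - M).factorial : ℂ)) *
        ∏ x : Fin N, MvPolynomial.X (j x) := by
  have hp : (∏ x : Fin N, (MvPolynomial.X (j x) : MvPolynomial ι ℂ)).IsHomogeneous N := by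
    simpa using MvPolynomial.IsHomogeneous.prod Finset.univ
      (fun x => (MvPolynomial.X (j x) : MvPolynomial ι ℂ)) (fun _ => 1)
      (fun x _ => MvPolynomial.isHomogeneous_X ℂ (j x))
  rw [number_aux _ hp M, nsmul_eq_mul]
  congr 1
  have h0 : ((N - M).factorial : ℂ) ≠ 0 := by exact_mod_cast (N - M).factorial_ne_zero
  have h : (N.factorial : ℂ) / ((N - M).factorial : ℂ) = (N.descFactorial M : ℂ) := by
    rw [div_eq_iff h0, ← Nat.factorial_mul_descFactorial hMN]
    push_cast
    ring
  rw [h, map_natCast]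
end

section
/- (Lemma 2, Bargmann realization.) Let ι be a type with decidable equality, M ≤ N natural numbers, i, j : Fin N → ι and k, l : Fin M → ι. In MvPolynomial ι ℂ, the full contraction (∂_{i_1}∘⋯∘∂_{i_N})( X_{k_1}⋯X_{k_M} · (∂_{l_1}∘⋯∘∂_{l_M})(X_{j_1}⋯X_{j_N}) ) equals the constant (N−M)! · (M!)² · Σ_{α,β} δ_{k; i∘α} · δ_{l; j∘β} · δ_{i∘α̂; j∘β̂}, where the sum runs over all pairs of strictly monotone maps α, β : Fin M → Fin N, α̂, β̂ : Fin (N−M) → Fin N denote the strictly monotone enumerations of the complements of the ranges of α and β respectively, and δ denotes the permutation-invariant Kronecker delta (of M-tuples for the first two factors and of (N−M)-tuples for the third). -/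
lemma pderivs_succ_aux {ι : Type*} [DecidableEq ι] {M : ℕ} (i : Fin (M + 1) → ι)
    (p : MvPolynomial ι ℂ) :
    pderivs i p = MvPolynomial.pderiv (i 0) (pderivs (fun x => i x.succ) p) := by
  simp [pderivs, List.ofFn_succ]

lemma pderivs_sum_aux {ι : Type*} [DecidableEq ι] {M : ℕ} (i : Fin M → ι)
    {T : Type*} (S : Finset T) (F : T → MvPolynomial ι ℂ) :
    pderivs i (∑ t ∈ S, F t) = ∑ t ∈ S, pderivs i (F t) := by
  induction M with
  | zero => simp [pderivs]
  | succ M ih => simp only [pderivs_succ_aux, ih, map_sum]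

lemma pderivs_C_mul_aux {ι : Type*} [DecidableEq ι] {M : ℕ} (i : Fin M → ι)
    (c : ℂ) (p : MvPolynomial ι ℂ) :
    pderivs i (MvPolynomial.C c * p) = MvPolynomial.C c * pderivs i p := by
  induction M with
  | zero => simp [pderivs]
  | succ M ih => simp only [pderivs_succ_aux, ih, MvPolynomial.pderiv_C_mul]; try simp [MvPolynomial.C_mul']

lemma pderiv_prod_X_aux {ι κ : Type*} [DecidableEq ι] [DecidableEq κ] (a : ι) (h : κ → ι)
    (S : Finset κ) :
    MvPolynomial.pderiv a (∏ y ∈ S, (MvPolynomial.X (h y) : MvPolynomial ι ℂ)) =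
      ∑ z ∈ S, MvPolynomial.C (if a = h z then 1 else 0) *
        ∏ y ∈ S.erase z, MvPolynomial.X (h y) := by
  induction S using Finset.induction_on with
  | empty => simp
  | insert b S hb ih =>
    rw [Finset.prod_insert hb, Finset.sum_insert hb, Derivation.leibniz, ih,
      Finset.erase_insert hb, add_comm]
    congr 1
    · rw [MvPolynomial.pderiv_X, smul_eq_mul, mul_comm]
      congr 1
      by_cases hab : a = h b
      · subst hab; simp
      · simp [hab, Ne.symm hab]
    · rw [smul_eq_mul, Finset.mul_sum]
      refine Finset.sum_congr rfl fun z hz => ?_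
      have hne : b ≠ z := fun e => hb (e ▸ hz)
      rw [Finset.erase_insert_of_ne hne, Finset.prod_insert (by simp [hb])]
      ring

lemma pderivs_prod_X_aux {ι κ : Type*} [DecidableEq ι] [DecidableEq κ] [Fintype κ] {M : ℕ}
    (i : Fin M → ι) (h : κ → ι) :
    pderivs i (∏ y, (MvPolynomial.X (h y) : MvPolynomial ι ℂ)) =
      ∑ f : Fin M ↪ κ, MvPolynomial.C (∏ x, if i x = h (f x) then 1 else 0) *
        ∏ y ∈ (Finset.univ.map f)ᶜ, MvPolynomial.X (h y) := by
  induction M with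
  | zero =>
    simp [pderivs]
  | succ M ih =>
    rw [pderivs_succ_aux, ih, map_sum, ← (Equiv.embeddingFinSucc M κ).symm.sum_comp,
      Fintype.sum_sigma]
    refine Finset.sum_congr rfl fun f _ => ?_
    rw [MvPolynomial.pderiv_C_mul, pderiv_prod_X_aux]
    try rw [MvPolynomial.smul_eq_C_mul]
    rw [Finset.mul_sum, Finset.sum_subtype (p := fun z => z ∉ Set.range f) _ (by simp)]
    refine Finset.sum_congr rfl fun z _ => ?_
    rw [← mul_assoc, ← map_mul, Equiv.coe_embeddingFinSucc_symm, Fin.prod_univ_succ]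
    simp only [Fin.cons_zero, Fin.cons_succ]
    rw [mul_comm (∏ x : Fin M, _)]
    congr 2
    ext y
    simp only [Finset.mem_erase, Finset.mem_compl, Finset.mem_map, Finset.mem_univ, true_and,
      Equiv.coe_embeddingFinSucc_symm, Fin.exists_fin_succ, Fin.cons_zero, Fin.cons_succ]
    grind

lemma sum_embedding_aux {M N : ℕ} {A : Type*} [AddCommMonoid A] (F : (Fin M ↪ Fin N) → A) :
    ∑ f, F f = ∑ t : {t : Finset (Fin N) // t.card = M}, ∑ σ : Equiv.Perm (Fin M),
      F (σ.toEmbedding.trans (t.1.orderEmbOfFin t.2).toEmbedding) := by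
  rw [← Fintype.sum_prod_type']
  symm
  refine Fintype.sum_bijective
    (fun p : {t : Finset (Fin N) // t.card = M} × Equiv.Perm (Fin M) =>
      p.2.toEmbedding.trans (p.1.1.orderEmbOfFin p.1.2).toEmbedding) ?_ _ _ (fun _ => rfl)
  rw [Fintype.bijective_iff_injective_and_card]
  constructor
  · rintro ⟨⟨s, hs⟩, σ⟩ ⟨⟨t, ht⟩, τ⟩ hst
    have h1 : ∀ x, s.orderEmbOfFin hs (σ x) = t.orderEmbOfFin ht (τ x) :=
      fun x => DFunLike.congr_fun hst x
    have : s = t := by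
      apply Finset.coe_injective
      rw [← Finset.range_orderEmbOfFin s hs, ← Finset.range_orderEmbOfFin t ht,
        ← σ.surjective.range_comp, ← τ.surjective.range_comp (t.orderEmbOfFin ht)]
      congr 1
      exact funext h1
    subst this
    have : σ = τ := Equiv.ext fun x => (s.orderEmbOfFin hs).injective (h1 x)
    rw [this]
  · simp [Fintype.card_perm, Fintype.card_embedding_eq, Nat.descFactorial_eq_factorial_mul_choose,
      mul_comm]

lemma sum_embedding_sum_aux {M N : ℕ} (hMN : M ≤ N) {A : Type*} [AddCommMonoid A]
    (hc : ∀ s : {s : Finset (Fin N) // s.card = M}, (s.1ᶜ).card = N - M)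
    (F : (Fin N ↪ Fin M ⊕ Fin (N - M)) → A) :
    ∑ f, F f = ∑ s : {s : Finset (Fin N) // s.card = M},
      ∑ p : Equiv.Perm (Fin M) × Equiv.Perm (Fin (N - M)),
      F ((Equiv.sumCongr p.1 p.2).trans (finSumEquivOfFinset s.2 (hc s))).symm.toEmbedding := by
  rw [← Fintype.sum_prod_type']
  symm
  refine Fintype.sum_bijective
    (fun q : {t : Finset (Fin N) // t.card = M} ×
        (Equiv.Perm (Fin M) × Equiv.Perm (Fin (N - M))) =>
      ((Equiv.sumCongr q.2.1 q.2.2).trans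
        (finSumEquivOfFinset q.1.2 (hc q.1))).symm.toEmbedding) ?_ _ _ (fun _ => rfl)
  rw [Fintype.bijective_iff_injective_and_card]
  constructor
  · rintro ⟨⟨s, hs⟩, σ, ρ⟩ ⟨⟨t, ht⟩, τ, π⟩ hst
    have h0 := Equiv.symm_bijective.injective (Equiv.toEmbedding_injective hst)
    have h1 : ∀ x, s.orderEmbOfFin hs (σ x) = t.orderEmbOfFin ht (τ x) :=
      fun x => DFunLike.congr_fun h0 (Sum.inl x)
    have h2 : ∀ x, sᶜ.orderEmbOfFin (hc ⟨s, hs⟩) (ρ x) = tᶜ.orderEmbOfFin (hc ⟨t, ht⟩) (π x) :=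
      fun x => DFunLike.congr_fun h0 (Sum.inr x)
    have : s = t := by
      apply Finset.coe_injective
      rw [← Finset.range_orderEmbOfFin s hs, ← Finset.range_orderEmbOfFin t ht,
        ← σ.surjective.range_comp, ← τ.surjective.range_comp (t.orderEmbOfFin ht)]
      congr 1
      exact funext h1
    subst this
    have e1 : σ = τ := Equiv.ext fun x => (s.orderEmbOfFin hs).injective (h1 x)
    have e2 : ρ = π := Equiv.ext fun x => (sᶜ.orderEmbOfFin _).injective (h2 x)
    rw [e1, e2]
  · have := Nat.choose_mul_factorial_mul_factorial hMN
    simp [Fintype.card_perm, Fintype.card_embedding_eq, Nat.add_sub_cancel' hMN,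
      Nat.descFactorial_self]
    rw [← this, mul_assoc]

lemma factorial_mul_permDelta_aux {ι : Type*} [DecidableEq ι] {S : ℕ} (u v : Fin S → ι) :
    (S.factorial : ℂ) * permDelta u v =
      ∑ σ : Equiv.Perm (Fin S), ∏ k : Fin S, if u k = v (σ k) then 1 else 0 := by
  have : (S.factorial : ℂ) ≠ 0 := by exact_mod_cast S.factorial_ne_zero
  rw [permDelta, mul_inv_cancel_left₀ this]

lemma sum_perm_symm_aux {ι : Type*} [DecidableEq ι] {S : ℕ} (u v : Fin S → ι) :
    (∑ σ : Equiv.Perm (Fin S), ∏ k : Fin S, if u (σ k) = v k then (1 : ℂ) else 0) =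
      ∑ σ : Equiv.Perm (Fin S), ∏ k : Fin S, if u k = v (σ k) then 1 else 0 := by
  rw [← Equiv.sum_comp (Equiv.inv (Equiv.Perm (Fin S)))]
  refine Finset.sum_congr rfl fun σ _ => ?_
  rw [← Equiv.prod_comp σ]
  simp

lemma pderivs_full_aux {ι : Type*} [DecidableEq ι] {M N : ℕ} (hMN : M ≤ N)
    (hc : ∀ s : {s : Finset (Fin N) // s.card = M}, (s.1ᶜ).card = N - M)
    (i : Fin N → ι) (k : Fin M → ι) (g : Fin (N - M) → ι) :
    pderivs i ((∏ x : Fin M, MvPolynomial.X (k x)) * ∏ y, MvPolynomial.X (g y)) =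
      MvPolynomial.C (∑ s : {s : Finset (Fin N) // s.card = M},
        ((M.factorial : ℂ) * permDelta k (fun x => i (s.1.orderEmbOfFin s.2 x))) *
        (((N - M).factorial : ℂ) *
          permDelta (fun x => i ((s.1ᶜ).orderEmbOfFin (hc s) x)) g)) := by
  have h := pderivs_prod_X_aux i (Sum.elim k g)
  rw [Fintype.prod_sum_type] at h
  simp only [Sum.elim_inl, Sum.elim_inr] at h
  rw [h, sum_embedding_sum_aux hMN hc, map_sum]
  refine Finset.sum_congr rfl fun s _ => ?_
  rw [factorial_mul_permDelta_aux, factorial_mul_permDelta_aux, ← sum_perm_symm_aux,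
    Finset.sum_mul_sum, ← Fintype.sum_prod_type', map_sum]
  refine Finset.sum_congr rfl fun p _ => ?_
  rw [Finset.univ_map_equiv_to_embedding, Finset.compl_univ, Finset.prod_empty, mul_one]
  congr 1
  rw [← Equiv.prod_comp ((Equiv.sumCongr p.1 p.2).trans (finSumEquivOfFinset s.2 (hc s))),
    Fintype.prod_sum_type]
  congr 1
  · refine Finset.prod_congr rfl fun x _ => ?_
    rw [Equiv.coe_toEmbedding, Equiv.symm_apply_apply]
    simp [eq_comm]
  · refine Finset.prod_congr rfl fun x _ => ?_
    rw [Equiv.coe_toEmbedding, Equiv.symm_apply_apply]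
    simp

/-- Lemma 2 (Bargmann realization): for `M ≤ N`,
`(∂_{i_1}∘⋯∘∂_{i_N})(X_{k_1}⋯X_{k_M}·(∂_{l_1}∘⋯∘∂_{l_M})(X_{j_1}⋯X_{j_N}))
  = (N−M)!·(M!)² · Σ_{α,β} δ_{k;i∘α} δ_{l;j∘β} δ_{i∘α̂;j∘β̂}`,
where the sums run over all `M`-element subsets `s, t` of `Fin N` (equivalently, over
the strictly monotone maps `α = s.orderEmbOfFin`, `β = t.orderEmbOfFin : Fin M → Fin N`),
and `α̂, β̂ : Fin (N−M) → Fin N` are the strictly monotone enumerations of the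
complements of their ranges. -/
theorem pderivs_creation_annihilation_matrix_element {ι : Type*} [DecidableEq ι]
    {M N : ℕ} (hMN : M ≤ N) (i j : Fin N → ι) (k l : Fin M → ι) :
    pderivs i ((∏ x : Fin M, MvPolynomial.X (k x)) *
        pderivs l (∏ x : Fin N, MvPolynomial.X (j x))) =
      MvPolynomial.C ((((N - M).factorial : ℂ) * (M.factorial : ℂ) ^ 2) *
        ∑ s : {s : Finset (Fin N) // s.card = M},
          ∑ t : {t : Finset (Fin N) // t.card = M},
            permDelta k (fun x => i (s.1.orderEmbOfFin s.2 x)) *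
              permDelta l (fun x => j (t.1.orderEmbOfFin t.2 x)) *
                permDelta
                  (fun x => i ((s.1ᶜ).orderEmbOfFin
                    (by simp [Finset.card_compl, s.2] : (s.1ᶜ).card = N - M) x))
                  (fun x => j ((t.1ᶜ).orderEmbOfFin
                    (by simp [Finset.card_compl, t.2] : (t.1ᶜ).card = N - M) x))) := by
  have hc : ∀ s : {s : Finset (Fin N) // s.card = M}, (s.1ᶜ).card = N - M :=
    fun s => by simp [Finset.card_compl, s.2]
  have key : pderivs l (∏ x : Fin N, (MvPolynomial.X (j x) : MvPolynomial ι ℂ)) =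
      ∑ t : {t : Finset (Fin N) // t.card = M},
        MvPolynomial.C ((M.factorial : ℂ) * permDelta l (fun x => j (t.1.orderEmbOfFin t.2 x))) *
          ∏ y, MvPolynomial.X (j ((t.1ᶜ).orderEmbOfFin (hc t) y)) := by
    rw [pderivs_prod_X_aux, sum_embedding_aux]
    refine Finset.sum_congr rfl fun t _ => ?_
    rw [factorial_mul_permDelta_aux, map_sum, Finset.sum_mul]
    refine Finset.sum_congr rfl fun σ _ => ?_
    congr 1
    have h1 : (Finset.univ.map (σ.toEmbedding.trans (t.1.orderEmbOfFin t.2).toEmbedding))ᶜ =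
        Finset.univ.map ((t.1ᶜ).orderEmbOfFin (hc t)).toEmbedding := by
      rw [← Finset.map_map, Finset.univ_map_equiv_to_embedding, Finset.map_orderEmbOfFin_univ,
        Finset.map_orderEmbOfFin_univ]
    rw [h1, Finset.prod_map]
    rfl
  rw [key, Finset.mul_sum, pderivs_sum_aux, Finset.sum_comm, Finset.mul_sum, map_sum]
  refine Finset.sum_congr rfl fun t _ => ?_
  rw [mul_left_comm, pderivs_C_mul_aux, pderivs_full_aux hMN hc, ← map_mul]
  congr 1
  rw [Finset.mul_sum, Finset.mul_sum]
  refine Finset.sum_congr rfl fun s _ => ?_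
  ring
end

section
/- (Trace reduction identity.) Let ι be a finite type with decidable equality, M ≤ N natural numbers, n, m : Fin M → ι, and let F : (Fin N → ι) → (Fin N → ι) → ℂ be permutation-invariant in each argument separately, i.e. F(u∘σ, v∘τ) = F(u, v) for all permutations σ, τ of {1,…,N}. Then Σ_{i : Fin N → ι} Σ_{α} ( Σ_{σ ∈ S_M} ∏_{k=1}^{M} [i(α_k) = n_{σ(k)}] ) · F(i[α ← m], i) = (N!/(N−M)!) · Σ_{r : Fin (N−M) → ι} F(m ⌢ r, n ⌢ r), where the sum over α runs over all strictly monotone maps α : Fin M → Fin N, i[α ← m] denotes the tuple obtained from i by replacing its entry at position α_k by m_k for each k = 1,…,M, m ⌢ r : Fin N → ι denotes the concatenation of the M-tuple m with the (N−M)-tuple r (Fin.append), and [P] equals 1 if P holds and 0 otherwise. -/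
theorem tri_aux {ι : Type*} [Fintype ι] [DecidableEq ι]
    {M N : ℕ} (hMN : M ≤ N) (n m : Fin M → ι)
    (F : (Fin N → ι) → (Fin N → ι) → ℂ)
    (hF : ∀ (u v : Fin N → ι) (σ τ : Equiv.Perm (Fin N)), F (u ∘ σ) (v ∘ τ) = F u v)
    (s : Finset (Fin N)) (hs : s.card = M) (σ : Equiv.Perm (Fin M)) :
    ∑ i : Fin N → ι,
        (∏ x : Fin M, if i (s.orderEmbOfFin hs x) = n (σ x) then (1 : ℂ) else 0) *
          F (fun l => if hl : l ∈ s then m ((s.orderIsoOfFin hs).symm ⟨l, hl⟩) else i l) i =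
        ∑ r : Fin (N - M) → ι,
          F (fun l => Fin.append m r (Fin.cast (by omega) l))
            (fun l => Fin.append n r (Fin.cast (by omega) l)) := by
  have hc : sᶜ.card = N - M := by rw [Finset.card_compl, hs, Fintype.card_fin]
  let e : Fin M ⊕ Fin (N - M) ≃ Fin N := finSumEquivOfFinset hs hc
  have hel : ∀ x, e (Sum.inl x) = s.orderEmbOfFin hs x := fun x => finSumEquivOfFinset_inl hs hc x
  have her : ∀ x, e (Sum.inr x) ∉ s := fun x => by
    have h1 : e (Sum.inr x) = sᶜ.orderEmbOfFin hc x := finSumEquivOfFinset_inr hs hc x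
    rw [h1]
    exact Finset.mem_compl.1 (Finset.orderEmbOfFin_mem _ _ _)
  let c : Fin N ≃ Fin M ⊕ Fin (N - M) :=
    (finCongr (by omega : N = M + (N - M))).trans finSumFinEquiv.symm
  have hcapp : ∀ (a : Fin M → ι) (r : Fin (N - M) → ι),
      (fun l => Fin.append a r (Fin.cast (by omega) l)) = Sum.elim a r ∘ c := by
    intro a r
    funext l
    obtain ⟨y, rfl⟩ := c.symm.surjective l
    rcases y with y | y <;> simp [c]
  let E : (Fin M → ι) × (Fin (N - M) → ι) ≃ (Fin N → ι) :=
    (Equiv.sumArrowEquivProdArrow _ _ _).symm.trans (e.arrowCongr (Equiv.refl _))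
  have hE : ∀ a r, E (a, r) = Sum.elim a r ∘ e.symm := fun a r => rfl
  rw [← Equiv.sum_comp E, Fintype.sum_prod_type, Finset.sum_comm]
  refine Finset.sum_congr rfl fun r _ => ?_
  rw [Finset.sum_eq_single (n ∘ σ)]
  · have h1 : (fun l => if hl : l ∈ s then m ((s.orderIsoOfFin hs).symm ⟨l, hl⟩)
        else E (n ∘ σ, r) l) = (Sum.elim m r ∘ c) ∘ (e.symm.trans c.symm) := by
      funext l
      obtain ⟨y, rfl⟩ := e.surjective l
      rcases y with y | y
      · have hm : e (Sum.inl y) ∈ s := by rw [hel]; exact Finset.orderEmbOfFin_mem _ _ _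
        have h2 : (s.orderIsoOfFin hs).symm ⟨e (Sum.inl y), hm⟩ = y := by
          rw [OrderIso.symm_apply_eq]
          apply Subtype.ext
          simp [hel]
        rw [dif_pos hm, h2]
        simp
      · rw [dif_neg (her y), hE]
        simp
    have h3 : E (n ∘ σ, r) = (Sum.elim n r ∘ c) ∘
        ((e.symm.trans (Equiv.sumCongr σ (Equiv.refl _))).trans c.symm) := by
      funext l
      obtain ⟨y, rfl⟩ := e.surjective l
      rw [hE]
      rcases y with y | y <;> simp
    rw [h1, hcapp, hcapp]
    have h4 : (∏ x : Fin M, if E (n ∘ σ, r) (s.orderEmbOfFin hs x) = n (σ x)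
        then (1 : ℂ) else 0) = 1 := by
      refine Finset.prod_eq_one fun x _ => ?_
      rw [← hel, hE]
      simp
    rw [h4, one_mul, h3, hF]
  · intro a _ ha
    obtain ⟨x, hx⟩ := Function.ne_iff.1 ha
    rw [Finset.prod_eq_zero (Finset.mem_univ x), zero_mul]
    rw [if_neg]
    rw [← hel, hE]
    simpa using hx
  · simp

/-- Trace reduction identity: for `F` permutation-invariant in each of its two
`N`-tuple arguments, summing over all tuples `i` and all strictly monotone maps
`α : Fin M → Fin N` (realized as `M`-element subsets `s` of `Fin N` with their
monotone enumeration `s.orderEmbOfFin`) gives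
`Σ_i Σ_α (Σ_{σ ∈ S_M} ∏_k [i(α_k) = n_{σ(k)}]) · F(i[α ← m], i)
  = (N!/(N−M)!) · Σ_r F(m ⌢ r, n ⌢ r)`. -/
theorem trace_reduction_identity {ι : Type*} [Fintype ι] [DecidableEq ι]
    {M N : ℕ} (hMN : M ≤ N) (n m : Fin M → ι)
    (F : (Fin N → ι) → (Fin N → ι) → ℂ)
    (hF : ∀ (u v : Fin N → ι) (σ τ : Equiv.Perm (Fin N)), F (u ∘ σ) (v ∘ τ) = F u v) :
    ∑ i : Fin N → ι, ∑ s : {s : Finset (Fin N) // s.card = M},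
        (∑ σ : Equiv.Perm (Fin M),
            ∏ x : Fin M, if i (s.1.orderEmbOfFin s.2 x) = n (σ x) then (1 : ℂ) else 0) *
          F (fun l => if hl : l ∈ s.1 then m ((s.1.orderIsoOfFin s.2).symm ⟨l, hl⟩) else i l)
            i =
      ((N.factorial : ℂ) / ((N - M).factorial : ℂ)) *
        ∑ r : Fin (N - M) → ι,
          F (fun l => Fin.append m r (Fin.cast (by omega) l))
            (fun l => Fin.append n r (Fin.cast (by omega) l)) := by
  simp_rw [Finset.sum_mul]
  rw [Finset.sum_comm]
  generalize hR : (∑ r : Fin (N - M) → ι,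
          F (fun l => Fin.append m r (Fin.cast (by omega) l))
            (fun l => Fin.append n r (Fin.cast (by omega) l))) = R
  refine (Finset.sum_congr rfl fun s _ => Finset.sum_comm.trans
    (Finset.sum_congr (s₁ := Finset.univ) rfl fun σ _ =>
      (tri_aux hMN n m F hF s.1 s.2 σ).trans hR)).trans ?_
  rw [Finset.sum_const, Finset.sum_const, smul_smul, nsmul_eq_mul]
  congr 1
  rw [Finset.card_univ, Finset.card_univ, Fintype.card_perm, Fintype.card_fin,
    Fintype.card_finset_len, Fintype.card_fin]
  rw [eq_div_iff (by exact_mod_cast Nat.factorial_ne_zero _)]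
  exact_mod_cast Nat.choose_mul_factorial_mul_factorial hMN
end
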